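/- Let α, β, γ be real numbers with α > -1/2, γ > -1, α + β + γ > -3/2, α ≤ 1/2 and γ ≥ α − 1. Define, for t ≥ 1, F(t) = ∫₀¹ s^{2α} (∫ₛ¹ u^β (u−s)^γ du) (∫ₜ^{t+1} v^β (v−s)^γ dv) ds, V(t) = ∫₀^{t+1} s^{2α} (∫_{max(s,t)}^{t+1} u^β (u−s)^γ du)² ds, C = ∫₀¹ s^{2α} (∫ₛ¹ u^β (u−s)^γ du)² ds, and r(t) = F(t) / (√C · √V(t)). Then the series ∑_{n=1}^∞ r(n) diverges to +∞ and the integral ∫₁^∞ r(t) dt is infinite. -/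

import Mathlib

open MeasureTheory Filter intervalIntegral

/-!
Since `t ≤ u ≤ t + 1` and `s ≤ 1` make the inner integrand of `F t` comparable to `t ^ (β + γ)`,
the covariance `F t` is at least a constant times `t ^ (β + γ)`. In the variance, integrating
`(u - s) ^ γ` over a window of length at most one costs `(t + 2 - s) ^ γ`, so `V t` is at most a
constant times `t ^ (2 * β) * ∫ s in 0..(t + 1), s ^ (2 * α) * (t + 2 - s) ^ (2 * γ)`. The
conditions `α ≤ 1 / 2` and `α - 1 ≤ γ` are what bounds this last integral by a constant times
`t ^ (2 * γ + 2) * log t`. Hence the correlation is at least a constant times `t⁻¹ / √(log t)`,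
and so times `t⁻¹ / log t`, the derivative of the unbounded function `log (log t)`.
-/

section

open Asymptotics Real Set

lemma rpow_le_rpow_abs_mul_rpow {k a x : ℝ} (c : ℝ) (hk : 0 ≤ k) (ha : 0 < a)
    (hax : a ≤ k * x) (hxa : x ≤ k * a) : x ^ c ≤ k ^ |c| * a ^ c := by
  have hkx : 0 < k * x := ha.trans_le hax
  have hx : 0 < x := pos_of_mul_pos_right hkx hk
  have hk' : 0 < k := pos_of_mul_pos_left hkx hx.le
  rcases le_total 0 c with hc | hc
  · rw [abs_of_nonneg hc, ← mul_rpow hk ha.le]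
    exact rpow_le_rpow hx.le hxa hc
  · rw [abs_of_nonpos hc, rpow_neg hk, le_inv_mul_iff₀ (rpow_pos_of_pos hk' c),
      ← mul_rpow hk hx.le]
    exact rpow_le_rpow_of_nonpos ha hax hc

lemma rpow_mul_log_le {t T : ℝ} (c : ℝ) (ht : 2 ≤ t) (htT : t ≤ T) (hTt : T ≤ 2 * t) :
    T ^ c * log T ≤ 2 ^ |c| * 2 * (t ^ c * log t) := by
  have hlog : log T ≤ 2 * log t := by
    rw [← Nat.cast_two, ← log_pow]
    exact log_le_log (by linarith) (by nlinarith)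
  have hpow : T ^ c ≤ 2 ^ |c| * t ^ c :=
    rpow_le_rpow_abs_mul_rpow c zero_le_two (by linarith) (by linarith) hTt
  calc T ^ c * log T ≤ 2 ^ |c| * t ^ c * (2 * log t) :=
        mul_le_mul hpow hlog (log_nonneg (by linarith)) (by positivity)
    _ = 2 ^ |c| * 2 * (t ^ c * log t) := by ring

/- For `s ≤ y` the factor `y` is comparable to `s + y`. For `y ≤ s` the factor `s` is, and the two
conditions on the exponents give `y ^ (q + 1) ≤ y ^ (q + 2 - p) ≤ (s + y) ^ (q + 2 - p)`. -/
lemma rpow_mul_rpow_le_rpow_add {p q s y : ℝ} (hp : p ≤ 1) (hpq : p ≤ q + 2) (hs : 0 < s)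
    (hy : 1 ≤ y) :
    s ^ p * y ^ q ≤
      2 ^ |q| * (s + y) ^ q * s ^ p + 2 ^ |p| * (s + y) ^ (q + 2) * y⁻¹ := by
  have hy0 : 0 < y := by linarith
  have hsy : 0 < s + y := by linarith
  rcases le_total s y with h | h
  · have hyq : y ^ q ≤ 2 ^ |q| * (s + y) ^ q :=
      rpow_le_rpow_abs_mul_rpow q zero_le_two hsy (by linarith) (by linarith)
    calc s ^ p * y ^ q ≤ s ^ p * (2 ^ |q| * (s + y) ^ q) := by gcongr
      _ = 2 ^ |q| * (s + y) ^ q * s ^ p := mul_comm _ _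
      _ ≤ _ := le_add_of_nonneg_right (by positivity)
  · have hsp : s ^ p ≤ 2 ^ |p| * (s + y) ^ p :=
      rpow_le_rpow_abs_mul_rpow p zero_le_two hsy (by linarith) (by linarith)
    have hyq : y ^ q ≤ (s + y) ^ (q + 2 - p) * y⁻¹ := by
      rw [← div_eq_mul_inv, le_div_iff₀ hy0, ← rpow_add_one hy0.ne']
      calc y ^ (q + 1) ≤ y ^ (q + 2 - p) := rpow_le_rpow_of_exponent_le hy (by linarith)
        _ ≤ (s + y) ^ (q + 2 - p) := rpow_le_rpow hy0.le (by linarith) (by linarith)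
    calc s ^ p * y ^ q ≤ 2 ^ |p| * (s + y) ^ p * ((s + y) ^ (q + 2 - p) * y⁻¹) := by gcongr
      _ = 2 ^ |p| * ((s + y) ^ p * (s + y) ^ (q + 2 - p)) * y⁻¹ := by ring
      _ = 2 ^ |p| * (s + y) ^ (q + 2) * y⁻¹ := by rw [← rpow_add hsy, add_sub_cancel]
      _ ≤ _ := le_add_of_nonneg_left (by positivity)

lemma intervalIntegrable_rpow_mul_const_sub_rpow {p b T : ℝ} (hp : -1 < p) (q : ℝ) (hb : 0 ≤ b)
    (hbT : b < T) : IntervalIntegrable (fun s : ℝ ↦ s ^ p * (T - s) ^ q) volume 0 b :=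
  (intervalIntegrable_rpow' hp).mul_continuousOn <|
    (continuousOn_const.sub continuousOn_id).rpow_const fun s hs ↦ by
      rw [uIcc_of_le hb] at hs
      exact Or.inl (sub_ne_zero.2 (hs.2.trans_lt hbT).ne')

lemma exists_integral_rpow_mul_const_sub_rpow_le_mul_log {p q : ℝ} (hp₀ : -1 < p) (hp : p ≤ 1)
    (hpq : p ≤ q + 2) :
    ∃ C : ℝ, 0 < C ∧ ∀ T : ℝ, 3 ≤ T →
      ∫ s in 0..(T - 1), s ^ p * (T - s) ^ q ≤ C * (T ^ (q + 2) * log T) := by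
  have hp1 : 0 < p + 1 := by linarith
  refine ⟨2 ^ |q| / (p + 1) + 2 ^ |p|, by positivity, fun T hT ↦ ?_⟩
  have hT0 : 0 < T := by linarith
  have hT1 : 0 ≤ T - 1 := by linarith
  have hlog : 1 ≤ log T := by
    rw [le_log_iff_exp_le hT0]
    exact exp_one_lt_three.le.trans hT
  have hint_rpow : IntervalIntegrable (fun s : ℝ ↦ s ^ p) volume 0 (T - 1) :=
    intervalIntegrable_rpow' hp₀
  have hint_inv : IntervalIntegrable (fun s : ℝ ↦ (T - s)⁻¹) volume 0 (T - 1) := by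
    simpa only [rpow_zero, one_mul, rpow_neg_one] using
      intervalIntegrable_rpow_mul_const_sub_rpow (p := 0) (by norm_num) (-1) hT1
        (sub_one_lt T)
  have hint_inv_val : ∫ s in 0..(T - 1), (T - s)⁻¹ = log T := by
    rw [integral_comp_sub_left (fun x : ℝ ↦ x⁻¹) T, sub_sub_cancel, sub_zero,
      integral_inv_of_pos one_pos hT0, div_one]
  have hpow : (T - 1) ^ (p + 1) ≤ T ^ (2 : ℝ) :=
    (rpow_le_rpow hT1 (by linarith) hp1.le).trans
      (rpow_le_rpow_of_exponent_le (by linarith) (by linarith))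
  calc ∫ s in 0..(T - 1), s ^ p * (T - s) ^ q
      ≤ ∫ s in 0..(T - 1), (2 ^ |q| * T ^ q * s ^ p + 2 ^ |p| * T ^ (q + 2) * (T - s)⁻¹) := by
        refine integral_mono_on_of_le_Ioo hT1
          (intervalIntegrable_rpow_mul_const_sub_rpow hp₀ q hT1 (sub_one_lt T))
          ((hint_rpow.const_mul _).add (hint_inv.const_mul _)) fun s hs ↦ ?_
        simpa only [add_sub_cancel] using
          rpow_mul_rpow_le_rpow_add hp hpq hs.1 (show 1 ≤ T - s by linarith [hs.2])
    _ = 2 ^ |q| * T ^ q * ((T - 1) ^ (p + 1) / (p + 1)) + 2 ^ |p| * T ^ (q + 2) * log T := by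
        rw [intervalIntegral.integral_add (hint_rpow.const_mul _) (hint_inv.const_mul _),
          intervalIntegral.integral_const_mul, intervalIntegral.integral_const_mul, hint_inv_val,
          integral_rpow (Or.inl hp₀), zero_rpow hp1.ne', sub_zero]
    _ ≤ 2 ^ |q| * T ^ q * (T ^ (2 : ℝ) * log T / (p + 1)) + 2 ^ |p| * T ^ (q + 2) * log T := by
        gcongr
        exact hpow.trans (le_mul_of_one_le_right (by positivity) hlog)
    _ = (2 ^ |q| / (p + 1) + 2 ^ |p|) * (T ^ (q + 2) * log T) := by
        rw [rpow_add hT0]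
        ring

lemma intervalIntegrable_sub_rpow {γ : ℝ} (hγ : -1 < γ) (s a b : ℝ) :
    IntervalIntegrable (fun u : ℝ ↦ (u - s) ^ γ) volume a b := by
  simpa only [sub_add_cancel] using
    (intervalIntegrable_rpow' (a := a - s) (b := b - s) hγ).comp_sub_right s

lemma integral_sub_rpow {γ : ℝ} (hγ : -1 < γ) (s b : ℝ) :
    ∫ u in s..b, (u - s) ^ γ = (b - s) ^ (γ + 1) / (γ + 1) := by
  rw [integral_comp_sub_right (fun x : ℝ ↦ x ^ γ) s, integral_rpow (Or.inl hγ), sub_self,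
    zero_rpow (by linarith), sub_zero]

lemma intervalIntegrable_rpow_mul_sub_rpow {γ : ℝ} (hγ : -1 < γ) (β s : ℝ) {a b : ℝ}
    (ha : 0 < a) (hb : 0 < b) :
    IntervalIntegrable (fun u : ℝ ↦ u ^ β * (u - s) ^ γ) volume a b :=
  (intervalIntegrable_sub_rpow hγ s a b).continuousOn_mul fun u hu ↦
    (continuousAt_rpow_const u β
      (Or.inl ((lt_min ha hb).trans_le hu.1).ne')).continuousWithinAt

lemma exists_integral_rpow_window_le {γ : ℝ} (hγ : -1 < γ) :
    ∃ C : ℝ, ∀ x : ℝ, 0 ≤ x →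
      ∫ w in (max 0 (x - 1))..x, w ^ γ ≤ C * (x + 1) ^ γ := by
  have hγ1 : 0 < γ + 1 := by linarith
  refine ⟨3 ^ |γ| + 2 ^ (γ + 1) / (γ + 1) * 3 ^ |γ|, fun x hx ↦ ?_⟩
  have hx1 : 0 < x + 1 := by linarith
  rw [add_mul]
  rcases le_total x 2 with h | h
  · have hone : 1 ≤ 3 ^ |γ| * (x + 1) ^ γ := by
      simpa only [one_rpow] using rpow_le_rpow_abs_mul_rpow γ (x := 1) zero_le_three hx1
        (by linarith) (by linarith)
    calc ∫ w in (max 0 (x - 1))..x, w ^ γ ≤ ∫ w in 0..x, w ^ γ := by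
          refine integral_mono_interval (le_max_left _ _) (max_le hx (by linarith)) le_rfl
            ?_ (intervalIntegrable_rpow' hγ)
          filter_upwards [ae_restrict_mem measurableSet_Ioc] with w hw using rpow_nonneg hw.1.le γ
      _ = x ^ (γ + 1) / (γ + 1) := by
          rw [integral_rpow (Or.inl hγ), zero_rpow hγ1.ne', sub_zero]
      _ ≤ 2 ^ (γ + 1) / (γ + 1) := by gcongr
      _ ≤ 2 ^ (γ + 1) / (γ + 1) * 3 ^ |γ| * (x + 1) ^ γ := by
          rw [mul_assoc]
          exact le_mul_of_one_le_right (by positivity) hone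
      _ ≤ _ := le_add_of_nonneg_left (by positivity)
  · rw [max_eq_right (by linarith)]
    calc ∫ w in (x - 1)..x, w ^ γ ≤ ∫ _w in (x - 1)..x, 3 ^ |γ| * (x + 1) ^ γ := by
          refine integral_mono_on_of_le_Ioo (by linarith) (intervalIntegrable_rpow' hγ)
            intervalIntegrable_const fun w hw ↦ ?_
          exact rpow_le_rpow_abs_mul_rpow γ zero_le_three hx1 (by linarith [hw.1])
            (by linarith [hw.2])
      _ = 3 ^ |γ| * (x + 1) ^ γ := by simp
      _ ≤ _ := le_add_of_nonneg_right (by positivity)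

/- Of `u ^ β`, the part `u ^ (-δ)` is bounded by `s ^ (-δ)`; what remains is at most a constant if
its exponent is nonnegative, and is absorbed into `(u - s) ^ γ` otherwise. -/
lemma exists_integral_rpow_mul_sub_rpow_le_rpow_neg {β γ δ : ℝ} (hγ : -1 < γ) (hδ : 0 ≤ δ)
    (hβγδ : -1 < β + γ + δ) (b : ℝ) :
    ∃ C : ℝ, ∀ s ∈ Ioc 0 b, ∫ u in s..b, u ^ β * (u - s) ^ γ ≤ C * s ^ (-δ) := by
  set m := min (β + δ) 0
  set M := max (β + δ) 0
  refine ⟨b ^ M * (b ^ (γ + m + 1) / (γ + m + 1)), fun s ⟨hs, hsb⟩ ↦ ?_⟩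
  have hb : 0 < b := hs.trans_le hsb
  have hm0 : m ≤ 0 := min_le_right _ _
  have hM0 : 0 ≤ M := le_max_right _ _
  have hmM : m + M = β + δ := by simpa only [add_zero] using min_add_max (β + δ) 0
  have hγm : -1 < γ + m := by
    rcases min_choice (β + δ) 0 with h | h <;> simp only [m, h] <;> linarith
  have hpointwise : ∀ u ∈ Ioo s b,
      u ^ β * (u - s) ^ γ ≤ s ^ (-δ) * b ^ M * (u - s) ^ (γ + m) := fun u hu ↦ by
    have hu0 : 0 < u := hs.trans hu.1
    have hus : 0 < u - s := sub_pos.2 hu.1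
    have hpow_neg : u ^ (-δ) ≤ s ^ (-δ) := rpow_le_rpow_of_nonpos hs hu.1.le (neg_nonpos.2 hδ)
    have hpow_M : u ^ M ≤ b ^ M := rpow_le_rpow hu0.le hu.2.le hM0
    have hpow_m : u ^ m ≤ (u - s) ^ m := rpow_le_rpow_of_nonpos hus (sub_le_self u hs.le) hm0
    calc u ^ β * (u - s) ^ γ = u ^ (-δ) * u ^ M * (u ^ m * (u - s) ^ γ) := by
          rw [show β = -δ + M + m by linarith, rpow_add hu0, rpow_add hu0, mul_assoc]
      _ ≤ s ^ (-δ) * b ^ M * ((u - s) ^ m * (u - s) ^ γ) :=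
          mul_le_mul (mul_le_mul hpow_neg hpow_M (by positivity) (by positivity))
            (mul_le_mul_of_nonneg_right hpow_m (by positivity)) (by positivity) (by positivity)
      _ = s ^ (-δ) * b ^ M * (u - s) ^ (γ + m) := by rw [← rpow_add hus, add_comm m]
  calc ∫ u in s..b, u ^ β * (u - s) ^ γ
      ≤ ∫ u in s..b, s ^ (-δ) * b ^ M * (u - s) ^ (γ + m) :=
        integral_mono_on_of_le_Ioo hsb (intervalIntegrable_rpow_mul_sub_rpow hγ β s hs hb)
          ((intervalIntegrable_sub_rpow hγm s s b).const_mul _) hpointwise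
    _ = s ^ (-δ) * b ^ M * ((b - s) ^ (γ + m + 1) / (γ + m + 1)) := by
        rw [intervalIntegral.integral_const_mul, integral_sub_rpow hγm]
    _ ≤ s ^ (-δ) * b ^ M * (b ^ (γ + m + 1) / (γ + m + 1)) := by
        gcongr <;> linarith
    _ = _ := by ring

lemma memLp_two_rpow {p : ℝ} (hp : -(1 / 2) < p) (b : ℝ) :
    MemLp (fun s : ℝ ↦ s ^ p) 2 (volume.restrict (Ioc 0 b)) := by
  rw [memLp_two_iff_integrable_sq (by fun_prop)]
  have hint : IntegrableOn (fun s : ℝ ↦ s ^ (p * 2)) (Ioc 0 b) :=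
    (intervalIntegrable_rpow' (by linarith)).1
  refine hint.congr_fun (fun s hs ↦ ?_) measurableSet_Ioc
  exact_mod_cast rpow_mul_natCast hs.1.le p 2

lemma stronglyMeasurable_intervalIntegral {X E : Type*} [MeasurableSpace X]
    [NormedAddCommGroup E] [NormedSpace ℝ E] {μ : Measure ℝ} [SFinite μ] {f : X → ℝ → E}
    {a b : X → ℝ} (hf : StronglyMeasurable (Function.uncurry f)) (ha : Measurable a)
    (hb : Measurable b) :
    StronglyMeasurable fun x ↦ ∫ u in (a x)..(b x), f x u ∂μ := by
  have hIoc : ∀ l r : X → ℝ, Measurable l → Measurable r →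
      StronglyMeasurable fun x ↦ ∫ u in Ioc (l x) (r x), f x u ∂μ := fun l r hl hr ↦ by
    have hset : MeasurableSet {z : X × ℝ | l z.1 < z.2 ∧ z.2 ≤ r z.1} :=
      (measurableSet_lt (hl.comp measurable_fst) measurable_snd).inter
        (measurableSet_le measurable_snd (hr.comp measurable_fst))
    convert (hf.indicator hset).integral_prod_right' (ν := μ) using 2 with x
    rw [← MeasureTheory.integral_indicator measurableSet_Ioc]
    rfl
  exact (hIoc a b ha hb).sub (hIoc b a hb ha)

/-- The integrand `s ↦ s ^ α * ∫ u in (max s a)..b, u ^ β * (u - s) ^ γ`, for `0 < s < b`, of the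
Wiener integral representing the increment `X_b - X_a`, `0 ≤ a ≤ b`, of the Gaussian Volterra
process `X_t = ∫₀ᵗ s ^ α ∫ₛᵗ u ^ β (u - s) ^ γ du dW_s`. -/
noncomputable def incrementKernel (α β γ a b s : ℝ) : ℝ :=
  s ^ α * ∫ u in (max s a)..b, u ^ β * (u - s) ^ γ

/-- The covariance of the increments `X_b - X_a` and `X_d - X_c` of the Volterra process, as given
by the Itô isometry. -/
noncomputable def incrementCov (α β γ a b c d : ℝ) : ℝ :=
  ∫ s in 0..(min b d), incrementKernel α β γ a b s * incrementKernel α β γ c d s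

/-- The Pearson correlation of the increments `X_b - X_a` and `X_d - X_c` of the Volterra
process. -/
noncomputable def incrementCorr (α β γ a b c d : ℝ) : ℝ :=
  incrementCov α β γ a b c d / (√(incrementCov α β γ a b a b) * √(incrementCov α β γ c d c d))

variable {α β γ a b c d s t : ℝ}

lemma incrementKernel_mul_incrementKernel (hs : 0 < s) :
    incrementKernel α β γ a b s * incrementKernel α β γ c d s =
      s ^ (2 * α) * (∫ u in (max s a)..b, u ^ β * (u - s) ^ γ) *
        ∫ v in (max s c)..d, v ^ β * (v - s) ^ γ := by
  rw [incrementKernel, incrementKernel, two_mul, rpow_add hs]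
  ring

lemma incrementCov_self (hb : 0 ≤ b) :
    incrementCov α β γ a b a b =
      ∫ s in 0..b, s ^ (2 * α) * (∫ u in (max s a)..b, u ^ β * (u - s) ^ γ) ^ 2 := by
  rw [incrementCov, min_self]
  refine integral_congr_uIoo fun s hs ↦ ?_
  rw [uIoo_of_le hb] at hs
  simp only [incrementKernel_mul_incrementKernel hs.1]
  ring

lemma incrementCov_zero_self (hb : 0 ≤ b) :
    incrementCov α β γ 0 b 0 b =
      ∫ s in 0..b, s ^ (2 * α) * (∫ u in s..b, u ^ β * (u - s) ^ γ) ^ 2 := by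
  rw [incrementCov_self hb]
  refine integral_congr_uIoo fun s hs ↦ ?_
  rw [uIoo_of_le hb] at hs
  simp only [max_eq_left hs.1.le]

lemma incrementCov_zero_left (hb : 0 ≤ b) (hbc : b ≤ c) (hcd : c ≤ d) :
    incrementCov α β γ 0 b c d =
      ∫ s in 0..b, s ^ (2 * α) * (∫ u in s..b, u ^ β * (u - s) ^ γ) *
        ∫ v in c..d, v ^ β * (v - s) ^ γ := by
  rw [incrementCov, min_eq_left (hbc.trans hcd)]
  refine integral_congr_uIoo fun s hs ↦ ?_
  rw [uIoo_of_le hb] at hs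
  simp only [incrementKernel_mul_incrementKernel hs.1, max_eq_left hs.1.le,
    max_eq_right (hs.2.le.trans hbc)]

lemma rpow_mul_sub_rpow_nonneg {u : ℝ} (hs : 0 ≤ s) (hsu : s ≤ u) :
    0 ≤ u ^ β * (u - s) ^ γ :=
  mul_nonneg (rpow_nonneg (hs.trans hsu) β) (rpow_nonneg (sub_nonneg.2 hsu) γ)

lemma incrementKernel_nonneg (hs : 0 ≤ s) (hsb : s ≤ b) (hab : a ≤ b) :
    0 ≤ incrementKernel α β γ a b s :=
  mul_nonneg (rpow_nonneg hs α) <| intervalIntegral.integral_nonneg (max_le hsb hab) fun _ hu ↦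
    rpow_mul_sub_rpow_nonneg hs ((le_max_left s a).trans hu.1)

lemma incrementKernel_pos (hγ : -1 < γ) (hs : 0 < s) (hsb : s < b) (hab : a < b) :
    0 < incrementKernel α β γ a b s := by
  refine mul_pos (rpow_pos_of_pos hs α) <| intervalIntegral_pos_of_pos_on
    (intervalIntegrable_rpow_mul_sub_rpow hγ β s (lt_max_of_lt_left hs) (hs.trans hsb))
    (fun u hu ↦ ?_) (max_lt hsb hab)
  have hsu : s < u := (le_max_left s a).trans_lt hu.1
  exact mul_pos (rpow_pos_of_pos (hs.trans hsu) β) (rpow_pos_of_pos (sub_pos.2 hsu) γ)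

lemma stronglyMeasurable_incrementKernel : StronglyMeasurable (incrementKernel α β γ a b) := by
  have hintegrand : StronglyMeasurable
      (Function.uncurry fun s u : ℝ ↦ u ^ β * (u - s) ^ γ) := by
    refine Measurable.stronglyMeasurable ?_
    simp only [Function.uncurry_def]
    fun_prop
  exact (by fun_prop : Measurable fun s : ℝ ↦ s ^ α).stronglyMeasurable.mul
    (stronglyMeasurable_intervalIntegral hintegrand (by fun_prop) measurable_const)

lemma memLp_incrementKernel (hα : -(1 / 2) < α) (hγ : -1 < γ) (hαβγ : -(3 / 2) < α + β + γ)
    (hab : a ≤ b) : MemLp (incrementKernel α β γ a b) 2 (volume.restrict (Ioc 0 b)) := by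
  obtain ⟨δ, hδ, hδα⟩ : ∃ δ, max 0 (-(β + γ + 1)) < δ ∧ δ < α + 1 / 2 :=
    exists_between (max_lt (by linarith) (by linarith))
  rw [max_lt_iff] at hδ
  obtain ⟨C, hC⟩ := exists_integral_rpow_mul_sub_rpow_le_rpow_neg hγ hδ.1.le
    (show -1 < β + γ + δ by linarith) b
  refine ((memLp_two_rpow (p := α - δ) (by linarith) b).const_mul C).mono'
    stronglyMeasurable_incrementKernel.aestronglyMeasurable ?_
  filter_upwards [ae_restrict_mem measurableSet_Ioc] with s hs
  have hintegral : ∫ u in (max s a)..b, u ^ β * (u - s) ^ γ ≤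
      ∫ u in s..b, u ^ β * (u - s) ^ γ := by
    refine integral_mono_interval (le_max_left s a) (max_le hs.2 hab) le_rfl ?_
      (intervalIntegrable_rpow_mul_sub_rpow hγ β s hs.1 (hs.1.trans_le hs.2))
    filter_upwards [ae_restrict_mem measurableSet_Ioc] with u hu using
      rpow_mul_sub_rpow_nonneg hs.1.le hu.1.le
  rw [norm_of_nonneg (incrementKernel_nonneg hs.1.le hs.2 hab), incrementKernel, sub_eq_add_neg,
    rpow_add hs.1, mul_left_comm]
  exact mul_le_mul_of_nonneg_left (hintegral.trans (hC s hs)) (rpow_nonneg hs.1.le α)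

lemma intervalIntegrable_incrementKernel_mul (hα : -(1 / 2) < α) (hγ : -1 < γ)
    (hαβγ : -(3 / 2) < α + β + γ) (hab : a ≤ b) (hcd : c ≤ d) (ht : 0 ≤ t) (htb : t ≤ b)
    (htd : t ≤ d) :
    IntervalIntegrable (fun s ↦ incrementKernel α β γ a b s * incrementKernel α β γ c d s)
      volume 0 t := by
  have hmem : ∀ {x y : ℝ}, x ≤ y → t ≤ y →
      MemLp (incrementKernel α β γ x y) 2 (volume.restrict (Ioc 0 t)) := fun hxy hty ↦
    (memLp_incrementKernel hα hγ hαβγ hxy).mono_measure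
      (Measure.restrict_mono (Ioc_subset_Ioc_right hty) le_rfl)
  exact (intervalIntegrable_iff_integrableOn_Ioc_of_le ht).2
    ((hmem hab htb).integrable_mul (hmem hcd htd))

lemma incrementCov_pos (hα : -(1 / 2) < α) (hγ : -1 < γ) (hαβγ : -(3 / 2) < α + β + γ)
    (hab : a < b) (hb : 0 < b) (hcd : c < d) (hd : 0 < d) : 0 < incrementCov α β γ a b c d := by
  have hmin : 0 < min b d := lt_min hb hd
  refine intervalIntegral_pos_of_pos_on (intervalIntegrable_incrementKernel_mul hα hγ hαβγ hab.le
    hcd.le hmin.le (min_le_left b d) (min_le_right b d)) (fun s hs ↦ ?_) hmin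
  rw [mem_Ioo, lt_min_iff] at hs
  exact mul_pos (incrementKernel_pos hγ hs.1 hs.2.1 hab) (incrementKernel_pos hγ hs.1 hs.2.2 hcd)

lemma incrementCorr_pos (hα : -(1 / 2) < α) (hγ : -1 < γ) (hαβγ : -(3 / 2) < α + β + γ)
    (hab : a < b) (hb : 0 < b) (hcd : c < d) (hd : 0 < d) : 0 < incrementCorr α β γ a b c d :=
  div_pos (incrementCov_pos hα hγ hαβγ hab hb hcd hd) <| mul_pos
    (sqrt_pos.2 (incrementCov_pos hα hγ hαβγ hab hb hab hb))
    (sqrt_pos.2 (incrementCov_pos hα hγ hαβγ hcd hd hcd hd))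

lemma rpow_add_mul_rpow_le_incrementKernel (hγ : -1 < γ) (ht : 1 ≤ t) (hs : 0 ≤ s)
    (hst : 2 * s ≤ t) :
    t ^ (β + γ) * s ^ α ≤ 2 ^ |β| * 2 ^ |γ| * incrementKernel α β γ t (t + 1) s := by
  have ht0 : 0 < t := by linarith
  have hpointwise : ∀ u ∈ Ioo t (t + 1),
      t ^ (β + γ) ≤ 2 ^ |β| * 2 ^ |γ| * (u ^ β * (u - s) ^ γ) := fun u ⟨htu, hut⟩ ↦ by
    have hu : t ^ β ≤ 2 ^ |β| * u ^ β :=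
      rpow_le_rpow_abs_mul_rpow β zero_le_two (by linarith) (by linarith) (by linarith)
    have hus : t ^ γ ≤ 2 ^ |γ| * (u - s) ^ γ :=
      rpow_le_rpow_abs_mul_rpow γ zero_le_two (by linarith) (by linarith) (by linarith)
    calc t ^ (β + γ) = t ^ β * t ^ γ := rpow_add ht0 β γ
      _ ≤ 2 ^ |β| * u ^ β * (2 ^ |γ| * (u - s) ^ γ) :=
          mul_le_mul hu hus (by positivity) ((rpow_nonneg ht0.le β).trans hu)
      _ = 2 ^ |β| * 2 ^ |γ| * (u ^ β * (u - s) ^ γ) := by ring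
  have hintegral : t ^ (β + γ) ≤
      2 ^ |β| * 2 ^ |γ| * ∫ u in t..(t + 1), u ^ β * (u - s) ^ γ := by
    calc t ^ (β + γ) = ∫ _u in t..(t + 1), t ^ (β + γ) := by
          rw [intervalIntegral.integral_const, add_sub_cancel_left, one_smul]
      _ ≤ ∫ u in t..(t + 1), 2 ^ |β| * 2 ^ |γ| * (u ^ β * (u - s) ^ γ) :=
          integral_mono_on_of_le_Ioo (by linarith) intervalIntegrable_const
            ((intervalIntegrable_rpow_mul_sub_rpow hγ β s ht0 (by linarith)).const_mul _)
            hpointwise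
      _ = _ := intervalIntegral.integral_const_mul _ _
  rw [incrementKernel, max_eq_right (by linarith)]
  calc t ^ (β + γ) * s ^ α
      ≤ 2 ^ |β| * 2 ^ |γ| * (∫ u in t..(t + 1), u ^ β * (u - s) ^ γ) * s ^ α := by gcongr
    _ = _ := by ring

lemma rpow_isBigO_incrementCov (hα : -(1 / 2) < α) (hγ : -1 < γ) (hαβγ : -(3 / 2) < α + β + γ)
    (hab : a < b) (hb : 0 < b) :
    (fun t ↦ t ^ (β + γ)) =O[atTop] fun t ↦ incrementCov α β γ a b t (t + 1) := by
  have hint : IntervalIntegrable (fun s ↦ incrementKernel α β γ a b s * s ^ α) volume 0 b :=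
    (intervalIntegrable_iff_integrableOn_Ioc_of_le hb.le).2
      ((memLp_incrementKernel hα hγ hαβγ hab.le).integrable_mul (memLp_two_rpow hα b))
  have hpos : 0 < ∫ s in 0..b, incrementKernel α β γ a b s * s ^ α :=
    intervalIntegral_pos_of_pos_on hint (fun s hs ↦
      mul_pos (incrementKernel_pos hγ hs.1 hs.2 hab) (rpow_pos_of_pos hs.1 α)) hb
  refine IsBigO.of_bound
    (2 ^ |β| * 2 ^ |γ| / ∫ s in 0..b, incrementKernel α β γ a b s * s ^ α) ?_
  filter_upwards [eventually_ge_atTop 1, eventually_ge_atTop (2 * b)] with t ht htb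
  have hcov : 0 < incrementCov α β γ a b t (t + 1) :=
    incrementCov_pos hα hγ hαβγ hab hb (lt_add_one t) (by linarith)
  rw [norm_of_nonneg (by positivity), norm_of_nonneg hcov.le, div_mul_eq_mul_div,
    le_div_iff₀ hpos, incrementCov, min_eq_left (by linarith),
    ← intervalIntegral.integral_const_mul, ← intervalIntegral.integral_const_mul]
  refine integral_mono_on_of_le_Ioo hb.le (hint.const_mul _)
    ((intervalIntegrable_incrementKernel_mul hα hγ hαβγ hab.le (lt_add_one t).le hb.le le_rfl
      (by linarith)).const_mul _) fun s hs ↦ ?_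
  rw [mul_left_comm, mul_left_comm (2 ^ |β| * 2 ^ |γ|)]
  exact mul_le_mul_of_nonneg_left
    (rpow_add_mul_rpow_le_incrementKernel hγ ht hs.1.le (by linarith [hs.2]))
    (incrementKernel_nonneg hs.1.le hs.2.le hab.le)

lemma exists_incrementKernel_le (α β : ℝ) (hγ : -1 < γ) :
    ∃ C : ℝ, ∀ t : ℝ, 1 ≤ t → ∀ s ∈ Ioc 0 (t + 1),
      incrementKernel α β γ t (t + 1) s ≤ C * t ^ β * (s ^ α * (t + 2 - s) ^ γ) := by
  obtain ⟨C, hwindow⟩ := exists_integral_rpow_window_le hγ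
  refine ⟨2 ^ |β| * C, fun t ht s ⟨hs, hst⟩ ↦ ?_⟩
  have hmax : max s t ≤ t + 1 := max_le hst (by linarith)
  have hintegral : ∫ u in (max s t)..(t + 1), (u - s) ^ γ ≤ C * (t + 2 - s) ^ γ := by
    rw [integral_comp_sub_right (fun w : ℝ ↦ w ^ γ) s, ← max_sub_sub_right, sub_self]
    have hw := hwindow (t + 1 - s) (sub_nonneg.2 hst)
    rwa [show t + 1 - s - 1 = t - s by ring, show t + 1 - s + 1 = t + 2 - s by ring] at hw
  have hrpow : ∀ u ∈ Ioo (max s t) (t + 1),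
      u ^ β * (u - s) ^ γ ≤ 2 ^ |β| * t ^ β * (u - s) ^ γ := fun u ⟨hu, hut⟩ ↦ by
    rw [max_lt_iff] at hu
    exact mul_le_mul_of_nonneg_right (rpow_le_rpow_abs_mul_rpow β zero_le_two (by linarith)
      (by linarith) (by linarith)) (rpow_nonneg (by linarith) γ)
  calc incrementKernel α β γ t (t + 1) s
      ≤ s ^ α * ∫ u in (max s t)..(t + 1), 2 ^ |β| * t ^ β * (u - s) ^ γ := by
        refine mul_le_mul_of_nonneg_left (integral_mono_on_of_le_Ioo hmax
          (intervalIntegrable_rpow_mul_sub_rpow hγ β s (lt_max_of_lt_left hs) (by linarith))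
          ((intervalIntegrable_sub_rpow hγ s _ _).const_mul _) hrpow) (by positivity)
    _ = s ^ α * (2 ^ |β| * t ^ β * ∫ u in (max s t)..(t + 1), (u - s) ^ γ) := by
        rw [intervalIntegral.integral_const_mul]
    _ ≤ s ^ α * (2 ^ |β| * t ^ β * (C * (t + 2 - s) ^ γ)) := by gcongr
    _ = _ := by ring

lemma exists_incrementCov_self_le_integral (β : ℝ) (hα : -(1 / 2) < α) (hγ : -1 < γ) :
    ∃ C : ℝ, ∀ t : ℝ, 1 ≤ t → incrementCov α β γ t (t + 1) t (t + 1) ≤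
      (C * t ^ β) ^ 2 * ∫ s in 0..(t + 1), s ^ (2 * α) * (t + 2 - s) ^ (2 * γ) := by
  obtain ⟨C, hkernel⟩ := exists_incrementKernel_le α β hγ
  refine ⟨C, fun t ht ↦ ?_⟩
  have ht1 : 0 ≤ t + 1 := by linarith
  have hsq : ∀ s ∈ Ioc 0 (t + 1),
      incrementKernel α β γ t (t + 1) s * incrementKernel α β γ t (t + 1) s ≤
        (C * t ^ β) ^ 2 * (s ^ (2 * α) * (t + 2 - s) ^ (2 * γ)) := fun s hs ↦ by
    have hts : 0 < t + 2 - s := by linarith [hs.2]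
    calc _ ≤ (C * t ^ β * (s ^ α * (t + 2 - s) ^ γ)) * (C * t ^ β * (s ^ α * (t + 2 - s) ^ γ)) :=
          mul_self_le_mul_self (incrementKernel_nonneg hs.1.le hs.2 (by linarith))
            (hkernel t ht s hs)
      _ = _ := by
          rw [two_mul, two_mul, rpow_add hs.1, rpow_add hts]
          ring
  rw [incrementCov, min_self, ← intervalIntegral.integral_const_mul, integral_of_le ht1,
    integral_of_le ht1]
  refine integral_mono_of_nonneg (ae_of_all _ fun s ↦ mul_self_nonneg _)
    (((intervalIntegrable_rpow_mul_const_sub_rpow (by linarith) (2 * γ) ht1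
      (by linarith)).const_mul _).1) ?_
  filter_upwards [ae_restrict_mem measurableSet_Ioc] with s hs using hsq s hs

lemma incrementCov_self_isBigO_rpow_sq_mul_log (β : ℝ) (hα : -(1 / 2) < α) (hγ : -1 < γ)
    (hα' : α ≤ 1 / 2) (hγ' : α - 1 ≤ γ) :
    (fun t ↦ incrementCov α β γ t (t + 1) t (t + 1)) =O[atTop]
      fun t ↦ (t ^ (β + γ + 1)) ^ 2 * log t := by
  obtain ⟨C₁, hcov⟩ := exists_incrementCov_self_le_integral β hα hγ
  obtain ⟨C₂, hC₂, hlog⟩ := exists_integral_rpow_mul_const_sub_rpow_le_mul_log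
    (p := 2 * α) (q := 2 * γ) (by linarith) (by linarith) (by linarith)
  refine IsBigO.of_bound (C₁ ^ 2 * (C₂ * (2 ^ |2 * γ + 2| * 2))) ?_
  filter_upwards [eventually_ge_atTop 2] with t ht
  have ht0 : 0 < t := by linarith
  have hlogt : 0 ≤ log t := log_nonneg (by linarith)
  have hintegral : ∫ s in 0..(t + 1), s ^ (2 * α) * (t + 2 - s) ^ (2 * γ) ≤
      C₂ * (2 ^ |2 * γ + 2| * 2 * (t ^ (2 * γ + 2) * log t)) := by
    rw [show t + 1 = t + 2 - 1 by ring]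
    exact (hlog (t + 2) (by linarith)).trans (mul_le_mul_of_nonneg_left
      (rpow_mul_log_le _ ht (by linarith) (by linarith)) hC₂.le)
  have hcov_nonneg : 0 ≤ incrementCov α β γ t (t + 1) t (t + 1) :=
    intervalIntegral.integral_nonneg (by rw [min_self]; linarith) fun s _ ↦ mul_self_nonneg _
  rw [norm_of_nonneg hcov_nonneg, norm_of_nonneg (by positivity)]
  calc incrementCov α β γ t (t + 1) t (t + 1)
      ≤ (C₁ * t ^ β) ^ 2 * (C₂ * (2 ^ |2 * γ + 2| * 2 * (t ^ (2 * γ + 2) * log t))) :=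
        (hcov t (by linarith)).trans (mul_le_mul_of_nonneg_left hintegral (sq_nonneg _))
    _ = C₁ ^ 2 * (C₂ * (2 ^ |2 * γ + 2| * 2)) * ((t ^ (β + γ + 1)) ^ 2 * log t) := by
        rw [show 2 * γ + 2 = (γ + 1) + (γ + 1) by ring, add_assoc β, rpow_add ht0 β,
          rpow_add ht0 (γ + 1)]
        ring

lemma sqrt_incrementCov_self_isBigO_rpow_mul_sqrt_log (β : ℝ) (hα : -(1 / 2) < α) (hγ : -1 < γ)
    (hα' : α ≤ 1 / 2) (hγ' : α - 1 ≤ γ) :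
    (fun t ↦ √(incrementCov α β γ t (t + 1) t (t + 1))) =O[atTop]
      fun t ↦ t ^ (β + γ + 1) * √(log t) := by
  have hnonneg : 0 ≤ᶠ[atTop] fun t : ℝ ↦ (t ^ (β + γ + 1)) ^ 2 * log t := by
    filter_upwards [eventually_ge_atTop 1] with t ht
    exact mul_nonneg (sq_nonneg _) (log_nonneg ht)
  simp only [sqrt_eq_rpow]
  refine ((incrementCov_self_isBigO_rpow_sq_mul_log β hα hγ hα' hγ').rpow (r := 1 / 2) (by norm_num)
    hnonneg).congr' .rfl ?_
  filter_upwards [eventually_ge_atTop 0] with t ht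
  rw [← sqrt_eq_rpow, ← sqrt_eq_rpow, sqrt_mul (sq_nonneg _), sqrt_sq (rpow_nonneg ht _)]

lemma inv_div_sqrt_log_isBigO_incrementCorr (hα : -(1 / 2) < α) (hγ : -1 < γ)
    (hαβγ : -(3 / 2) < α + β + γ) (hα' : α ≤ 1 / 2) (hγ' : α - 1 ≤ γ) (hab : a < b)
    (hb : 0 < b) :
    (fun t ↦ t⁻¹ / √(log t)) =O[atTop] fun t ↦ incrementCorr α β γ a b t (t + 1) := by
  have hself : √(incrementCov α β γ a b a b) ≠ 0 :=
    (sqrt_pos.2 (incrementCov_pos hα hγ hαβγ hab hb hab hb)).ne'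
  have hinv : (fun t ↦ (t ^ (β + γ + 1) * √(log t))⁻¹) =O[atTop]
      fun t ↦ (√(incrementCov α β γ t (t + 1) t (t + 1)))⁻¹ := by
    refine (sqrt_incrementCov_self_isBigO_rpow_mul_sqrt_log β hα hγ hα' hγ').inv_rev ?_
    filter_upwards [eventually_ge_atTop 0] with t ht hzero
    have ht1 : 0 < t + 1 := by linarith
    exact absurd hzero (sqrt_pos.2
      (incrementCov_pos hα hγ hαβγ (lt_add_one t) ht1 (lt_add_one t) ht1)).ne'
  refine (((rpow_isBigO_incrementCov hα hγ hαβγ hab hb).mul hinv).const_mul_right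
    (inv_ne_zero hself)).congr' ?_ ?_
  · filter_upwards [eventually_gt_atTop 0] with t ht
    rw [rpow_add_one ht.ne', mul_assoc, mul_inv, mul_inv_cancel_left₀ (rpow_pos_of_pos ht _).ne',
      mul_inv, div_eq_mul_inv]
  · refine .of_forall fun t ↦ ?_
    simp only [incrementCorr, div_eq_mul_inv, mul_inv]
    ring

lemma inv_div_log_isBigO_incrementCorr (hα : -(1 / 2) < α) (hγ : -1 < γ)
    (hαβγ : -(3 / 2) < α + β + γ) (hα' : α ≤ 1 / 2) (hγ' : α - 1 ≤ γ) (hab : a < b)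
    (hb : 0 < b) :
    (fun t ↦ t⁻¹ / log t) =O[atTop] fun t ↦ incrementCorr α β γ a b t (t + 1) := by
  refine IsBigO.trans (IsBigO.of_bound' ?_)
    (inv_div_sqrt_log_isBigO_incrementCorr hα hγ hαβγ hα' hγ' hab hb)
  filter_upwards [eventually_gt_atTop 0, tendsto_log_atTop.eventually_ge_atTop 1] with t ht hlog
  rw [norm_of_nonneg (by positivity), norm_of_nonneg (by positivity)]
  have hsqrt : √(log t) ≤ log t := sqrt_le_self_iff.2 (.inr hlog)
  gcongr

lemma not_integrableAtFilter_inv_div_log :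
    ¬ IntegrableAtFilter (fun x : ℝ ↦ x⁻¹ / log x) atTop := by
  rintro ⟨k, hk, hint⟩
  refine not_integrableOn_of_tendsto_norm_atTop_of_deriv_isBigO_filter
    (f := fun x ↦ log (log x)) atTop hk ?_
    (tendsto_norm_atTop_atTop.comp (tendsto_log_atTop.comp tendsto_log_atTop)) ?_ hint
  · filter_upwards [eventually_gt_atTop 1] with x hx
    exact differentiableAt_log_log (by linarith) (by linarith) (by linarith)
  · rw [deriv_log_log]
    exact isBigO_refl _ _

lemma antitoneOn_inv_div_log : AntitoneOn (fun x : ℝ ↦ x⁻¹ / log x) (Ioi 1) := by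
  intro x hx y hy hxy
  rw [mem_Ioi] at hx hy
  exact div_le_div₀ (inv_nonneg.2 (by linarith)) (inv_anti₀ (by linarith) hxy) (log_pos hx)
    (log_le_log (by linarith) hxy)

lemma not_summable_inv_div_log : ¬ Summable fun n : ℕ ↦ (n : ℝ)⁻¹ / log n := fun hsum ↦ by
  have hanti : AntitoneOn (fun x : ℝ ↦ x⁻¹ / log x) (Ici (2 : ℕ)) :=
    antitoneOn_inv_div_log.mono (Ici_subset_Ioi.2 (by norm_num))
  have hnonneg : ∀ x ∈ Ioi ((2 : ℕ) : ℝ), 0 ≤ x⁻¹ / log x := fun x hx ↦ by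
    have hx1 : 1 < x := lt_trans (by norm_num) hx
    exact div_nonneg (inv_nonneg.2 (by linarith)) (log_pos hx1).le
  exact not_integrableAtFilter_inv_div_log ⟨Ioi (2 : ℕ), Ioi_mem_atTop _,
    hanti.integrableOn_Ioi_of_summable_comp_add ((summable_nat_add_iff 2).2 hsum) hnonneg⟩

lemma tendsto_sum_range_atTop_of_isBigO {f g : ℕ → ℝ} (hg : ¬ Summable g)
    (hgf : g =O[atTop] f) (hf : ∀ n, 0 ≤ f (n + 1)) :
    Tendsto (fun N ↦ ∑ n ∈ Finset.range N, f (n + 1)) atTop atTop := by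
  rw [← not_summable_iff_tendsto_nat_atTop_of_nonneg hf, summable_nat_add_iff 1]
  exact fun hsum ↦ hg (summable_of_isBigO_nat hsum hgf)

lemma setLIntegral_ofReal_eq_top_of_isBigO {X E : Type*} [MeasurableSpace X]
    [NormedAddCommGroup E] {μ : Measure X} {l : Filter X} [l.IsMeasurablyGenerated] {s : Set X}
    {f : X → ℝ} {g : X → E} (hs : s ∈ l) (hgm : AEStronglyMeasurable g μ)
    (hg : ¬ IntegrableAtFilter g l μ) (hgf : g =O[l] f) (hf : 0 ≤ᶠ[l] f) :
    ∫⁻ x in s, ENNReal.ofReal (f x) ∂μ = ⊤ := by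
  by_contra hfin
  obtain ⟨c, hc, hbound⟩ := hgf.exists_nonneg
  obtain ⟨u, hul, hu, hgu⟩ := (hbound.bound.and hf).exists_measurable_mem
  refine hg ⟨u ∩ s, inter_mem hul hs, hgm.restrict, ?_⟩
  calc ∫⁻ x in u ∩ s, ‖g x‖ₑ ∂μ
      ≤ ∫⁻ x in u ∩ s, ENNReal.ofReal c * ENNReal.ofReal (f x) ∂μ := by
        rw [← Measure.restrict_restrict hu]
        refine setLIntegral_mono_ae' hu (ae_of_all _ fun x hx ↦ ?_)
        rw [← ENNReal.ofReal_mul hc, ← ofReal_norm]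
        exact ENNReal.ofReal_le_ofReal
          ((hgu x hx).1.trans_eq (by rw [norm_of_nonneg (hgu x hx).2]))
    _ = ENNReal.ofReal c * ∫⁻ x in u ∩ s, ENNReal.ofReal (f x) ∂μ :=
        lintegral_const_mul' _ _ ENNReal.ofReal_ne_top
    _ ≤ ENNReal.ofReal c * ∫⁻ x in s, ENNReal.ofReal (f x) ∂μ := by
        gcongr
        exact inter_subset_right
    _ < ⊤ := ENNReal.mul_lt_top ENNReal.ofReal_lt_top (Ne.lt_top hfin)

end

/-- Theorem 3.5 (consequence): if `α ≤ 1/2` and `γ ≥ α - 1`, then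
`∑_{n≥1} corr(X₁, X_{n+1} - X_n)` diverges to `+∞` and
`∫₁^∞ corr(X₁, X_{t+1} - X_t) dt` is infinite. -/
theorem stmt_11 (α β γ : ℝ) (hα : -(1/2 : ℝ) < α) (hγ : -1 < γ)
    (hαβγ : -(3/2 : ℝ) < α + β + γ) (hα' : α ≤ 1/2) (hγ' : α - 1 ≤ γ)
    (F V r : ℝ → ℝ) (C : ℝ)
    (hF : ∀ t : ℝ, F t = ∫ s in (0:ℝ)..1, s ^ (2*α) *
      (∫ u in s..1, u ^ β * (u - s) ^ γ) *
      (∫ v in t..(t+1), v ^ β * (v - s) ^ γ))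
    (hV : ∀ t : ℝ, V t = ∫ s in (0:ℝ)..(t+1), s ^ (2*α) *
      (∫ u in (max s t)..(t+1), u ^ β * (u - s) ^ γ) ^ 2)
    (hC : C = ∫ s in (0:ℝ)..1, s ^ (2*α) *
      (∫ u in s..1, u ^ β * (u - s) ^ γ) ^ 2)
    (hr : ∀ t : ℝ, r t = F t / (Real.sqrt C * Real.sqrt (V t))) :
    Tendsto (fun N : ℕ => ∑ n ∈ Finset.range N, r (n + 1)) atTop atTop ∧
    (∫⁻ t in Set.Ici (1:ℝ), ENNReal.ofReal (r t)) = ⊤ := by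
  have hrcorr : ∀ t, 1 ≤ t → r t = incrementCorr α β γ 0 1 t (t + 1) := fun t ht ↦ by
    rw [hr, hF, hV, hC, incrementCorr, incrementCov_zero_left zero_le_one ht (lt_add_one t).le,
      incrementCov_zero_self zero_le_one, incrementCov_self (by linarith)]
  have hrpos : ∀ t, 1 ≤ t → 0 < r t := fun t ht ↦ by
    rw [hrcorr t ht]
    exact incrementCorr_pos hα hγ hαβγ one_pos one_pos (lt_add_one t) (by linarith)
  have hbound : (fun t ↦ t⁻¹ / Real.log t) =O[atTop] r :=
    (inv_div_log_isBigO_incrementCorr hα hγ hαβγ hα' hγ' one_pos one_pos).congr' .rfl <| by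
      filter_upwards [eventually_ge_atTop 1] with t ht using (hrcorr t ht).symm
  constructor
  · exact_mod_cast tendsto_sum_range_atTop_of_isBigO not_summable_inv_div_log
      (hbound.comp_tendsto tendsto_natCast_atTop_atTop)
      fun n ↦ (hrpos _ (by exact_mod_cast n.succ_pos)).le
  · refine setLIntegral_ofReal_eq_top_of_isBigO (Ici_mem_atTop 1)
      (Measurable.aestronglyMeasurable (by fun_prop)) not_integrableAtFilter_inv_div_log hbound ?_
    filter_upwards [eventually_ge_atTop 1] with t ht using (hrpos t ht).le
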